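/- Let K ⊆ ℝ^d be an isotropic simplicial polytope with unique irredundant H-representation K = ∩_{i=1}^m H_i. Fix a facet index i′ and let P = ∩_{i ≠ i′} H_i. Let v_1, …, v_d be the vertices of facet i′ and fix j′ ∈ {1,…,d}. Let Z be the affine hull of { v_j : j ≠ j′ }, and introduce cylindrical coordinates (ρ, θ, z) with origin an arbitrary point of Z ∩ K: ρ ∈ [0,∞) and θ ∈ [−π, π) are polar coordinates in the 2-dimensional plane orthogonal to Z, z ranges over Z, and θ is oriented so that points of facet i′ have θ = 0 and all of K has θ ∈ (−π, 0]. Let K_t = { x ∈ P : θ(x) ∈ [−π, t] } and S_0 = P ∩ { x : θ(x) = 0 }, and let D be the probability distribution on S_0 with density proportional to ρ(x). Then d/dt det A(K_t) |_{t=0} = ( E_{X ∼ D}[‖X‖²] − d ) · ( d/dt vol(K_t) |_{t=0} ) / vol(K). -/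

import Mathlib

open MeasureTheory Finset
open scoped ProbabilityTheory
open scoped RealInnerProductSpace

noncomputable section

abbrev Euc (d : ℕ) := EuclideanSpace ℝ (Fin d)

section GeneralSpace

variable {V : Type*} [NormedAddCommGroup V] [NormedSpace ℝ V]

/-- The dimension of a set: the rank of the direction of its affine span. -/
noncomputable def sdim (F : Set V) : ℕ := Module.finrank ℝ (affineSpan ℝ F).direction

/-- `F` is a simplex with `n` vertices (an `(n-1)`-dimensional simplex). -/
def IsSimplexWith (n : ℕ) (F : Set V) : Prop :=
  ∃ w : Fin n → V, AffineIndependent ℝ w ∧ F = convexHull ℝ (Set.range w)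

/-- A polytope is the convex hull of finitely many points. -/
def IsPolytope (P : Set V) : Prop := ∃ S : Finset V, P = convexHull ℝ (S : Set V)

/-- A facet of a `d`-dimensional polytope: an exposed face of dimension `d - 1`. -/
def IsFacetOf (d : ℕ) (P F : Set V) : Prop := IsExposed ℝ P F ∧ sdim F = d - 1

/-- A `d`-dimensional simplicial polytope: a polytope of dimension `d`, each facet of which
is a `(d-1)`-dimensional simplex (i.e. has `d` affinely independent vertices). -/
def IsSimplicialPolytope (d : ℕ) (P : Set V) : Prop :=
  IsPolytope P ∧ sdim P = d ∧ ∀ F : Set V, IsFacetOf d P F → IsSimplexWith d F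

end GeneralSpace

/-- A convex body: compact, convex, with nonempty interior. -/
def IsConvexBody {d : ℕ} (K : Set (Euc d)) : Prop :=
  IsCompact K ∧ Convex ℝ K ∧ (interior K).Nonempty

/-- The barycenter `μ_K` of the uniform distribution on `K`. -/
noncomputable def centroid {d : ℕ} (K : Set (Euc d)) : Euc d :=
  (volume K).toReal⁻¹ • ∫ x in K, x

/-- The covariance matrix `A(K)` of the uniform distribution on `K`. -/
noncomputable def covMatrix {d : ℕ} (K : Set (Euc d)) : Matrix (Fin d) (Fin d) ℝ :=
  Matrix.of fun i j =>
    (volume K).toReal⁻¹ * ∫ x in K, (x i - centroid K i) * (x j - centroid K j)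

/-- The isotropic constant `L_K`, defined by `L_K ^ (2d) = det A(K) / vol(K) ^ 2`. -/
noncomputable def isoConst {d : ℕ} (K : Set (Euc d)) : ℝ :=
  ((covMatrix K).det / (volume K).toReal ^ 2) ^ ((2 * (d : ℝ))⁻¹)

/-- `K` is isotropic: its barycenter is the origin and its covariance matrix is the identity. -/
def IsIsotropic {d : ℕ} (K : Set (Euc d)) : Prop :=
  centroid K = 0 ∧ covMatrix K = 1

/-- `P` is a local extremum (local maximum or local minimum) of `K ↦ L_K` among convex bodies,
with respect to the Hausdorff metric. -/
def IsLocalExtremumOfIsoConst {d : ℕ} (P : Set (Euc d)) : Prop :=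
  (∃ ε > 0, ∀ K : Set (Euc d), IsConvexBody K →
      Metric.hausdorffDist K P < ε → isoConst K ≤ isoConst P) ∨
  (∃ ε > 0, ∀ K : Set (Euc d), IsConvexBody K →
      Metric.hausdorffDist K P < ε → isoConst P ≤ isoConst K)

/-- The polar angle of `(a, b) ∈ ℝ²`, normalized to lie in `[-π, π)`. -/
noncomputable def polarAngle (a b : ℝ) : ℝ :=
  if Complex.arg ⟨a, b⟩ = Real.pi then -Real.pi else Complex.arg ⟨a, b⟩

/-!
The facet `i'` spans the hyperplane through `Z` orthogonal to `w`, because irredundancy makes this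
hyperplane meet the interior of `P`. Hence `K = K_0` is the part of `P` below it, and in the
coordinates (hyperplane) × (height along `w`) the set `K_t` is, up to a null set, the part of `P`
where the height is at most `ρ⁺ tan t`, with `ρ⁺` the positive part of the coordinate along `u`.
By Fubini and differentiation under the integral sign,
`d/dt ∫_{K_t} f = c ∫_{S_0} f ρ` at `t = 0` for every continuous `f`: the indicator of `P` is
continuous almost everywhere on the hyperplane since the frontier of `P` is null in it, and `K_t`
stays bounded for small `t` by convexity. The constant `c` compares Lebesgue measure with
(Hausdorff measure) × (Lebesgue measure on the line); its value cancels.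

Since `A(K_0) = 1` and `K_0` has mean `0`, Jacobi's formula gives
`(det A(K_t))' = tr A(K_t)' = c (∫_{S_0} ‖x‖² ρ - d ∫_{S_0} ρ) / vol K`.
-/

section Preliminaries

theorem hasDerivAt_det {n 𝕜 : Type*} [Fintype n] [DecidableEq n] [NontriviallyNormedField 𝕜]
    {A : 𝕜 → Matrix n n 𝕜} {A' : Matrix n n 𝕜} {t : 𝕜}
    (hA : ∀ i j, HasDerivAt (fun s => A s i j) (A' i j) t) :
    HasDerivAt (fun s => (A s).det) ((A t).adjugate * A').trace t := by
  have hcol (i : n) : ((A t).adjugate * A') i i = ∑ σ : Equiv.Perm n,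
      ((Equiv.Perm.sign σ : ℤ) : 𝕜) * ((∏ j ∈ univ.erase i, A t (σ j) j) • A' (σ i) i) := by
    change ((A t).adjugate.mulVec (A'.transpose i)) i = _
    rw [← Matrix.cramer_eq_adjugate_mulVec, Matrix.cramer_apply, Matrix.det_apply']
    refine Finset.sum_congr rfl fun σ _ => ?_
    rw [← Finset.prod_erase_mul _ _ (mem_univ i), Matrix.updateCol_self, Matrix.transpose_apply,
      smul_eq_mul]
    congr 2
    exact Finset.prod_congr rfl fun j hj => Matrix.updateCol_ne (ne_of_mem_erase hj)
  simp only [Matrix.det_apply', Matrix.trace, Matrix.diag_apply, hcol]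
  rw [Finset.sum_comm]
  simp only [← Finset.mul_sum]
  exact HasDerivAt.fun_sum fun σ _ =>
    (HasDerivAt.fun_finsetProd fun i _ => hA (σ i) i).const_mul _

theorem integrableOn_of_continuous_of_isBounded {X F : Type*} [MetricSpace X] [ProperSpace X]
    [MeasurableSpace X] [OpensMeasurableSpace X] [NormedAddCommGroup F] {μ : Measure X}
    [IsFiniteMeasureOnCompacts μ] {f : X → F} (hf : Continuous f) {S : Set X}
    (hS : Bornology.IsBounded S) : IntegrableOn f S μ :=
  (hf.continuousOn.integrableOn_compact hS.isCompact_closure).mono_set subset_closure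

theorem integral_mul_eq_zero_of_nonneg {α : Type*} [MeasurableSpace α] {μ : Measure α}
    {f g : α → ℝ} (hg : 0 ≤ g) (hgi : Integrable g μ) (h : ∫ x, g x ∂μ = 0) :
    ∫ x, f x * g x ∂μ = 0 := by
  refine integral_eq_zero_of_ae ?_
  filter_upwards [(integral_eq_zero_iff_of_nonneg hg hgi).1 h] with x hx
  rw [hx, Pi.zero_apply, mul_zero]

end Preliminaries

section PolarAngle

variable {a b t : ℝ}

theorem neg_pi_le_polarAngle (a b : ℝ) : -Real.pi ≤ polarAngle a b := by
  unfold polarAngle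
  split_ifs
  · exact le_rfl
  · exact (Complex.neg_pi_lt_arg _).le

theorem measurable_polarAngle : Measurable (fun q : ℝ × ℝ => polarAngle q.1 q.2) := by
  have harg : Measurable (fun q : ℝ × ℝ => Complex.arg ⟨q.1, q.2⟩) :=
    Complex.measurable_arg.comp Complex.measurableEquivRealProd.symm.measurable
  exact Measurable.ite (measurableSet_eq_fun harg measurable_const) measurable_const harg

theorem polarAngle_eq_zero_iff : polarAngle a b = 0 ↔ 0 ≤ a ∧ b = 0 := by
  rw [← Complex.arg_eq_zero_iff (z := ⟨a, b⟩)]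
  unfold polarAngle
  split_ifs with h
  · simp [h, Real.pi_ne_zero]
  · rfl

theorem polarAngle_nonpos_iff : polarAngle a b ≤ 0 ↔ b ≤ 0 := by
  unfold polarAngle
  split_ifs with h
  · exact iff_of_true (neg_nonpos.2 Real.pi_pos.le) (Complex.arg_eq_pi_iff.1 h).2.le
  rcases lt_trichotomy b 0 with hb | rfl | hb
  · exact iff_of_true (Complex.arg_neg_iff.2 hb).le hb.le
  · refine iff_of_true (Complex.arg_eq_zero_iff.2 ⟨?_, rfl⟩).le le_rfl
    by_contra! ha
    exact h (Complex.arg_eq_pi_iff.2 ⟨ha, rfl⟩)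
  · refine iff_of_false (fun harg => hb.ne' ?_) hb.not_ge
    exact (Complex.arg_eq_zero_iff.1 (harg.antisymm (Complex.arg_nonneg_iff.2 hb.le))).2

theorem polarAngle_le_iff_of_pos (ha : 0 < a) (ht : |t| < Real.pi / 2) :
    polarAngle a b ≤ t ↔ b ≤ a * Real.tan t := by
  have harg : |Complex.arg ⟨a, b⟩| < Real.pi / 2 :=
    Complex.abs_arg_lt_pi_div_two_iff.2 (Or.inl ha)
  have hne : Complex.arg ⟨a, b⟩ ≠ Real.pi :=
    ((abs_lt.1 harg).2.trans (half_lt_self Real.pi_pos)).ne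
  rw [polarAngle, if_neg hne, ← Real.strictMonoOn_tan.le_iff_le (abs_lt.1 harg) (abs_lt.1 ht),
    Complex.tan_arg, div_le_iff₀' ha]

theorem polarAngle_le_iff_of_nonpos (ha : a ≤ 0) (hab : a ≠ 0 ∨ b ≠ 0)
    (ht : |t| < Real.pi / 2) : polarAngle a b ≤ t ↔ b ≤ 0 := by
  obtain ⟨ht₁, ht₂⟩ := abs_lt.1 ht
  have harg : Real.pi / 2 ≤ |Complex.arg ⟨a, b⟩| := by
    by_contra! h
    rcases Complex.abs_arg_lt_pi_div_two_iff.1 h with h | h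
    · exact ha.not_gt h
    · exact hab.elim (· (congrArg Complex.re h)) (· (congrArg Complex.im h))
  rw [← polarAngle_nonpos_iff (a := a)]
  unfold polarAngle
  split_ifs
  · constructor <;> intro <;> linarith [Real.pi_pos]
  · rcases le_abs.1 harg with h | h <;> constructor <;> intro <;> linarith

theorem polarAngle_le_iff (ha : a ≠ 0) (ht : |t| < Real.pi / 2) :
    polarAngle a b ≤ t ↔ b ≤ max a 0 * Real.tan t := by
  rcases le_or_gt a 0 with ha₀ | ha₀
  · rw [polarAngle_le_iff_of_nonpos ha₀ (Or.inl ha) ht, max_eq_right ha₀, zero_mul]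
  · rw [polarAngle_le_iff_of_pos ha₀ ht, max_eq_left ha₀.le]

theorem le_max_mul_tan_of_polarAngle_le (ht : |t| < Real.pi / 2) (h : polarAngle a b ≤ t) :
    b ≤ max a 0 * Real.tan t := by
  rcases ne_or_eq a 0 with ha | rfl
  · exact (polarAngle_le_iff ha ht).1 h
  rw [max_self, zero_mul]
  rcases ne_or_eq b 0 with hb | rfl
  · exact (polarAngle_le_iff_of_nonpos le_rfl (Or.inr hb) ht).1 h
  · exact le_rfl

end PolarAngle

section Subgraph

variable {α : Type*} [MeasurableSpace α] {μ : Measure α} [SFinite μ]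

theorem lipschitzWith_setIntegral_Iic_mul {g : ℝ → ℝ} (hg : Integrable g) {B : ℝ}
    (hB : ∀ y, ‖g y‖ ≤ B) (x : ℝ) :
    LipschitzWith (Real.nnabs (x * B)) fun s => ∫ y in Set.Iic (x * s), g y := by
  refine LipschitzWith.of_dist_le_mul fun s r => ?_
  have hB₀ : 0 ≤ B := (norm_nonneg _).trans (hB 0)
  rw [dist_eq_norm, Real.dist_eq,
    intervalIntegral.integral_Iic_sub_Iic hg.integrableOn hg.integrableOn, Real.coe_nnabs]
  calc ‖∫ y in x * r..x * s, g y‖ ≤ B * |x * s - x * r| :=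
        intervalIntegral.norm_integral_le_of_norm_le_const fun y _ => hB y
    _ = |x * B| * |s - r| := by rw [← mul_sub, abs_mul, abs_mul, abs_of_nonneg hB₀]; ring

theorem hasDerivAt_setIntegral_Iic_mul {g : ℝ → ℝ} (hg : Integrable g)
    (hm : StronglyMeasurable g) {x : ℝ} (hc : x ≠ 0 → ContinuousAt g 0) :
    HasDerivAt (fun s => ∫ y in Set.Iic (x * s), g y) (x * g 0) 0 := by
  rcases eq_or_ne x 0 with rfl | hx
  · simpa only [zero_mul] using hasDerivAt_const (0 : ℝ) (∫ y in Set.Iic (0 : ℝ), g y)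
  have hsplit (s : ℝ) : ∫ y in Set.Iic (x * s), g y =
      (∫ y in Set.Iic (0 : ℝ), g y) + ∫ y in (0 : ℝ)..x * s, g y := by
    rw [← intervalIntegral.integral_Iic_sub_Iic hg.integrableOn hg.integrableOn,
      add_sub_cancel]
  have hftc : HasDerivAt (fun r => ∫ y in (0 : ℝ)..r, g y) (g 0) (x * 0) := by
    rw [mul_zero]
    exact intervalIntegral.integral_hasDerivAt_right (by simp) hm.stronglyMeasurableAtFilter
      (hc hx)
  simp only [hsplit]
  exact ((hftc.comp 0 ((hasDerivAt_id 0).const_mul x)).const_add _).congr_deriv (by ring)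

theorem hasDerivAt_setIntegral_subgraph_mul {X B : α → ℝ} {h : α × ℝ → ℝ} (hX : Measurable X)
    (hm : Measurable h) (hi : Integrable h (μ.prod volume)) (hB : ∀ p y, ‖h (p, y)‖ ≤ B p)
    (hXB : Integrable (fun p => X p * B p) μ)
    (hc : ∀ᵐ p ∂μ, X p ≠ 0 → ContinuousAt (fun y => h (p, y)) 0) :
    HasDerivAt (fun s => ∫ q in {q | q.2 ≤ X q.1 * s}, h q ∂(μ.prod volume))
      (∫ p, X p * h (p, 0) ∂μ) 0 := by
  have hS (s : ℝ) : MeasurableSet {q : α × ℝ | q.2 ≤ X q.1 * s} :=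
    measurableSet_le measurable_snd ((hX.comp measurable_fst).mul_const s)
  have hind (s : ℝ) := hi.indicator (hS s)
  have hfiber (s : ℝ) (p : α) : ∫ y, {q : α × ℝ | q.2 ≤ X q.1 * s}.indicator h (p, y) =
      ∫ y in Set.Iic (X p * s), h (p, y) := by
    rw [← integral_indicator measurableSet_Iic]
    rfl
  have hF (s : ℝ) : Integrable (fun p => ∫ y in Set.Iic (X p * s), h (p, y)) μ := by
    simpa only [hfiber] using (hind s).integral_prod_left
  have hFubini (s : ℝ) : ∫ q in {q | q.2 ≤ X q.1 * s}, h q ∂(μ.prod volume) =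
      ∫ p, (∫ y in Set.Iic (X p * s), h (p, y)) ∂μ := by
    rw [← integral_indicator (hS s), integral_prod _ (hind s)]
    simp only [hfiber]
  simp only [hFubini]
  refine (hasDerivAt_integral_of_dominated_loc_of_lip Filter.univ_mem
    (.of_forall fun s => (hF s).aestronglyMeasurable) (hF 0) ?_ ?_ hXB ?_).2
  · exact (hX.mul (hm.comp (measurable_id.prodMk measurable_const))).aestronglyMeasurable
  · filter_upwards [hi.prod_right_ae] with p hp
    exact (lipschitzWith_setIntegral_Iic_mul hp (hB p) (X p)).lipschitzOnWith
  · filter_upwards [hi.prod_right_ae, hc] with p hp hcp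
    exact hasDerivAt_setIntegral_Iic_mul hp
      (hm.comp measurable_prodMk_left).stronglyMeasurable hcp

end Subgraph

section Hyperplane

variable {E : Type*} [NormedAddCommGroup E] [InnerProductSpace ℝ E]

theorem isometry_const_add_coe (H : Submodule ℝ E) (o : E) : Isometry fun p : H => o + (p : E) :=
  (IsometryEquiv.addLeft o).isometry.comp H.subtypeₗᵢ.isometry

theorem range_const_add_coe (H : Submodule ℝ E) (o : E) :
    Set.range (fun p : H => o + (p : E)) = {x | x - o ∈ H} := by
  ext x
  exact ⟨by rintro ⟨p, rfl⟩; simp, fun hx => ⟨⟨x - o, hx⟩, add_sub_cancel _ _⟩⟩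

/-- The orthogonal decomposition `(p, y) ↦ p + y • w` along a unit vector `w`. -/
def orthogonalSplitting {w : E} (hw : ‖w‖ = 1) : ((ℝ ∙ w)ᗮ × ℝ) ≃L[ℝ] E :=
  ContinuousLinearEquiv.equivOfInverse
    ((ℝ ∙ w)ᗮ.subtypeL.coprod (ContinuousLinearMap.toSpanSingleton ℝ w))
    ((ℝ ∙ w)ᗮ.orthogonalProjectionOnto.prod (innerSL ℝ w))
    (fun q => by
      have hq : ⟪w, (q.1 : E)⟫ = 0 := Submodule.mem_orthogonal_singleton_iff_inner_right.1 q.1.2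
      refine Prod.ext (Subtype.ext ?_) ?_
      · simp [Submodule.starProjection_unit_singleton ℝ hw, hw]
      · simp [inner_add_right, real_inner_smul_right, hq, hw])
    (fun x => by simp [Submodule.starProjection_unit_singleton ℝ hw])

/-- The coordinates `(p, y) ↦ o + (p + y • w)` adapted to the hyperplane through `o` with unit
normal `w`. -/
def hyperplaneCoord (o : E) {w : E} (hw : ‖w‖ = 1) : ((ℝ ∙ w)ᗮ × ℝ) ≃ₜ E :=
  (orthogonalSplitting hw).toHomeomorph.trans (Homeomorph.addLeft o)

section HyperplaneCoord

variable {o u w : E} (hw : ‖w‖ = 1)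

theorem hyperplaneCoord_apply (q : (ℝ ∙ w)ᗮ × ℝ) :
    hyperplaneCoord o hw q = o + (q.1 + q.2 • w) := rfl

theorem hyperplaneCoord_mk_zero (p : (ℝ ∙ w)ᗮ) : hyperplaneCoord o hw (p, 0) = o + p := by
  rw [hyperplaneCoord_apply, zero_smul, add_zero]

theorem inner_hyperplaneCoord_sub_normal (q : (ℝ ∙ w)ᗮ × ℝ) :
    ⟪hyperplaneCoord o hw q - o, w⟫ = q.2 := by
  rw [hyperplaneCoord_apply, add_sub_cancel_left, inner_add_left, real_inner_smul_left,
    Submodule.mem_orthogonal_singleton_iff_inner_left.1 q.1.2, real_inner_self_eq_norm_sq, hw,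
    one_pow, mul_one, zero_add]

theorem inner_hyperplaneCoord_sub_of_inner_eq_zero (huw : ⟪u, w⟫ = 0) (q : (ℝ ∙ w)ᗮ × ℝ) :
    ⟪hyperplaneCoord o hw q - o, u⟫ = ⟪(q.1 : E), u⟫ := by
  rw [hyperplaneCoord_apply, add_sub_cancel_left, inner_add_left, real_inner_smul_left,
    real_inner_comm u w, huw, mul_zero, add_zero]

end HyperplaneCoord

variable [MeasurableSpace E] [BorelSpace E]

theorem map_const_add_coe_hausdorffMeasure (H : Submodule ℝ E) (o : E) {r : ℝ} (hr : 0 ≤ r) :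
    (μH[r] : Measure H).map (fun p : H => o + (p : E)) = μH[r].restrict {x | x - o ∈ H} := by
  rw [(isometry_const_add_coe H o).map_hausdorffMeasure (Or.inl hr), range_const_add_coe]

variable [FiniteDimensional ℝ E]

theorem measurableEmbedding_const_add_coe (H : Submodule ℝ E) (o : E) :
    MeasurableEmbedding fun p : H => o + (p : E) :=
  (isometry_const_add_coe H o).isClosedEmbedding.measurableEmbedding

theorem setIntegral_hausdorffMeasure_of_subset_affine {H : Submodule ℝ E} {o : E} {r : ℝ}
    (hr : 0 ≤ r) {S : Set E} (hS : MeasurableSet S) (hSH : S ⊆ {x | x - o ∈ H}) (f : E → ℝ) :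
    ∫ x in S, f x ∂μH[r] = ∫ p : H, S.indicator f (o + p) ∂μH[r] := by
  rw [← Set.inter_eq_left.2 hSH, ← Measure.restrict_restrict hS, Set.inter_eq_left.2 hSH,
    ← map_const_add_coe_hausdorffMeasure H o hr, ← integral_indicator hS,
    (measurableEmbedding_const_add_coe H o).integral_map]

theorem integrableOn_hausdorffMeasure_of_subset_affine {H : Submodule ℝ E} {o : E} {f : E → ℝ}
    (hf : Continuous f) {S : Set E} (hS : Bornology.IsBounded S) (hSH : S ⊆ {x | x - o ∈ H}) :
    IntegrableOn f S μH[Module.finrank ℝ H] := by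
  have hpre : IntegrableOn (f ∘ fun p : H => o + (p : E)) ((fun p : H => o + (p : E)) ⁻¹' S)
      μH[Module.finrank ℝ H] :=
    integrableOn_of_continuous_of_isBounded
      (hf.comp (isometry_const_add_coe H o).continuous)
      ((isometry_const_add_coe H o).antilipschitz.isBounded_preimage hS)
  rwa [← (measurableEmbedding_const_add_coe H o).integrableOn_map_iff,
    map_const_add_coe_hausdorffMeasure H o (Nat.cast_nonneg _), IntegrableOn,
    Measure.restrict_restrict_of_subset hSH] at hpre

theorem ae_const_add_coe_notMem_frontier {H : Submodule ℝ E} {o : E} {P : Set E}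
    (hP : Convex ℝ P) (hne : (interior P ∩ {x | x - o ∈ H}).Nonempty) (μ : Measure H)
    [μ.IsAddHaarMeasure] : ∀ᵐ p : H ∂μ, o + (p : E) ∉ frontier P := by
  set e : H → E := fun p => o + (p : E)
  have hconv : Convex ℝ (e ⁻¹' interior P) :=
    (hP.interior.translate_preimage_right o).linear_preimage H.subtype
  have hopen : IsOpen (e ⁻¹' interior P) :=
    isOpen_interior.preimage (isometry_const_add_coe H o).continuous
  obtain ⟨p₀, hp₀⟩ : ∃ p₀ : H, e p₀ ∈ interior P := by
    obtain ⟨x, hxP, hxH⟩ := hne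
    exact ⟨⟨x - o, hxH⟩, by simpa only [e, add_sub_cancel] using hxP⟩
  have hclosure : e ⁻¹' closure P ⊆ closure (e ⁻¹' interior P) := fun p hp => by
    refine closure_mono ?_ (segment_subset_closure_openSegment (right_mem_segment ℝ p₀ p))
    rintro _ ⟨s, t, hs, ht, hst, rfl⟩
    refine hP.openSegment_interior_closure_subset_interior hp₀ hp ⟨s, t, hs, ht, hst, ?_⟩
    change s • (o + (p₀ : E)) + t • (o + (p : E)) = o + (s • (p₀ : E) + t • (p : E))
    rw [smul_add, smul_add, add_add_add_comm, ← add_smul, hst, one_smul]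
  filter_upwards [measure_eq_zero_iff_ae_notMem.1 (hconv.addHaar_frontier μ)] with p hp hpP
  refine hp ?_
  rw [hopen.frontier_eq]
  exact ⟨hclosure hpP.1, hpP.2⟩

theorem exists_volume_eq_smul_map_hyperplaneCoord (o : E) {w : E} (hw : ‖w‖ = 1) :
    ∃ c : NNReal, (volume : Measure E) =
      c • ((μH[Module.finrank ℝ (ℝ ∙ w)ᗮ]).prod volume).map (hyperplaneCoord o hw) := by
  set ν := ((μH[Module.finrank ℝ (ℝ ∙ w)ᗮ]).prod volume).map (orthogonalSplitting hw)
  have hν : ν.IsAddHaarMeasure := (orthogonalSplitting hw).isAddHaarMeasure_map _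
  have hmap : ((μH[Module.finrank ℝ (ℝ ∙ w)ᗮ]).prod volume).map (hyperplaneCoord o hw) = ν := by
    rw [← map_add_left_eq_self ν o, Measure.map_map (measurable_const_add o)
      (orthogonalSplitting hw).continuous.measurable]
    rfl
  rw [hmap]
  exact ⟨_, Measure.isAddLeftInvariant_eq_smul volume ν⟩

end Hyperplane

section Hinge

variable {E : Type*} [NormedAddCommGroup E] [InnerProductSpace ℝ E]

/-- The angle of `x` in cylindrical coordinates around the axis through `o` orthogonal to `u` and
`w`, measured from `u` towards `w`. -/
def cylAngle (o u w x : E) : ℝ := polarAngle ⟪x - o, u⟫ ⟪x - o, w⟫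

/-- The distance of `x` from the axis through `o` orthogonal to the orthonormal vectors `u` and
`w`. -/
def cylRadius (o u w x : E) : ℝ := Real.sqrt (⟪x - o, u⟫ ^ 2 + ⟪x - o, w⟫ ^ 2)

variable {o u w : E}

theorem continuous_cylRadius : Continuous (cylRadius o u w) := by
  unfold cylRadius
  fun_prop

variable [MeasurableSpace E] [BorelSpace E]

theorem measurable_inner_sub (o u : E) : Measurable fun x : E => ⟪x - o, u⟫ :=
  (by fun_prop : Continuous fun x : E => ⟪x - o, u⟫).measurable

theorem measurable_cylAngle : Measurable (cylAngle o u w) :=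
  measurable_polarAngle.comp ((measurable_inner_sub o u).prodMk (measurable_inner_sub o w))

variable [FiniteDimensional ℝ E]

theorem ae_inner_sub_ne_zero (hu : u ≠ 0) (o : E) : ∀ᵐ x : E, ⟪x - o, u⟫ ≠ 0 := by
  have hne : AffineSubspace.mk' o (ℝ ∙ u)ᗮ ≠ ⊤ := fun h => by
    have hmem : o + u ∈ AffineSubspace.mk' o (ℝ ∙ u)ᗮ := h ▸ AffineSubspace.mem_top ℝ E _
    rw [AffineSubspace.mem_mk', vsub_eq_sub, add_sub_cancel_left,
      Submodule.mem_orthogonal_singleton_iff_inner_left, inner_self_eq_zero] at hmem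
    exact hu hmem
  filter_upwards [measure_eq_zero_iff_ae_notMem.1 (Measure.addHaar_affineSubspace volume _ hne)]
    with x hx hxu
  exact hx (Submodule.mem_orthogonal_singleton_iff_inner_left.2 hxu)

theorem setIntegral_cylAngle_le (hu : u ≠ 0) {P : Set E} (hP : MeasurableSet P) (f : E → ℝ) {t : ℝ}
    (ht : |t| < Real.pi / 2) :
    ∫ x in {x ∈ P | cylAngle o u w x ≤ t}, f x =
      ∫ x in {x | ⟪x - o, w⟫ ≤ max ⟪x - o, u⟫ 0 * Real.tan t}, P.indicator f x := by
  rw [setIntegral_indicator hP, Set.inter_comm]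
  refine setIntegral_congr_set ?_
  filter_upwards [ae_inner_sub_ne_zero hu o] with x hx
  exact propext (and_congr_right fun _ => polarAngle_le_iff hx ht)

theorem hasDerivAt_setIntegral_subgraph_hyperplaneCoord {w : E} (hw : ‖w‖ = 1) (u : E) {P : Set E}
    (hPm : MeasurableSet P) (hPb : Bornology.IsBounded P)
    (hP : ∀ᵐ p : (ℝ ∙ w)ᗮ ∂μH[Module.finrank ℝ (ℝ ∙ w)ᗮ], o + (p : E) ∉ frontier P)
    {f : E → ℝ} (hf : Continuous f) :
    HasDerivAt (fun s => ∫ q in {q : (ℝ ∙ w)ᗮ × ℝ | q.2 ≤ max ⟪(q.1 : E), u⟫ 0 * s},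
        P.indicator f (hyperplaneCoord o hw q) ∂((μH[Module.finrank ℝ (ℝ ∙ w)ᗮ]).prod volume))
      (∫ p : (ℝ ∙ w)ᗮ, max ⟪(p : E), u⟫ 0 * P.indicator f (o + p)
        ∂μH[Module.finrank ℝ (ℝ ∙ w)ᗮ]) 0 := by
  set φ := hyperplaneCoord o hw
  have hcompact : IsCompact (φ ⁻¹' closure P) := φ.isCompact_preimage.2 hPb.isCompact_closure
  have hXcont : Continuous fun p : (ℝ ∙ w)ᗮ => max ⟪(p : E), u⟫ 0 := by fun_prop
  obtain ⟨C, hC⟩ := hPb.isCompact_closure.exists_bound_of_continuousOn hf.continuousOn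
  have hbase : IsCompact (Prod.fst '' (φ ⁻¹' closure P)) := hcompact.image continuous_fst
  have hbound (p : (ℝ ∙ w)ᗮ) (y : ℝ) : ‖P.indicator f (φ (p, y))‖ ≤
      (Prod.fst '' (φ ⁻¹' closure P)).indicator (fun _ => |C|) p := by
    by_cases hq : φ (p, y) ∈ P
    · have hp : p ∈ Prod.fst '' (φ ⁻¹' closure P) := ⟨(p, y), subset_closure hq, rfl⟩
      rw [Set.indicator_of_mem hq, Set.indicator_of_mem hp]
      exact (hC _ (subset_closure hq)).trans (le_abs_self C)
    · rw [Set.indicator_of_notMem hq, norm_zero]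
      exact Set.indicator_nonneg (fun _ _ => abs_nonneg C) p
  simp only [← hyperplaneCoord_mk_zero hw]
  refine hasDerivAt_setIntegral_subgraph_mul (h := fun q => P.indicator f (φ q))
    hXcont.measurable ((hf.measurable.indicator hPm).comp φ.continuous.measurable) ?_ hbound ?_ ?_
  · have := ((hf.comp φ.continuous).continuousOn.integrableOn_compact hcompact).mono_set
      (μ := (μH[Module.finrank ℝ (ℝ ∙ w)ᗮ]).prod volume) (Set.preimage_mono subset_closure)
    exact (integrable_indicator_iff (φ.continuous.measurable hPm)).2 this
  · refine ((integrable_indicator_iff hbase.measurableSet).2 ((hXcont.mul_const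
      |C|).continuousOn.integrableOn_compact hbase)).congr (.of_forall fun p => ?_)
    exact Set.indicator_mul_right _ _ _
  · filter_upwards [hP] with p hp _
    rw [← hyperplaneCoord_mk_zero hw] at hp
    exact (hf.continuousOn.continuousAt_indicator hp).comp (f := fun y => φ (p, y))
      (by fun_prop : Continuous fun y => φ (p, y)).continuousAt

theorem setIntegral_cylAngle_eq_zero {P : Set E} (hP : MeasurableSet P) (f : E → ℝ) {r : ℝ}
    (hr : 0 ≤ r) :
    ∫ x in {x ∈ P | cylAngle o u w x = 0}, f x * cylRadius o u w x ∂μH[r] =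
      ∫ p : (ℝ ∙ w)ᗮ, max ⟪(p : E), u⟫ 0 * P.indicator f (o + p) ∂μH[r] := by
  have hS : MeasurableSet {x ∈ P | cylAngle o u w x = 0} :=
    hP.inter (measurableSet_eq_fun measurable_cylAngle measurable_const)
  have hSw : {x ∈ P | cylAngle o u w x = 0} ⊆ {x | x - o ∈ (ℝ ∙ w)ᗮ} := fun x hx =>
    Submodule.mem_orthogonal_singleton_iff_inner_left.2 (polarAngle_eq_zero_iff.1 hx.2).2
  rw [setIntegral_hausdorffMeasure_of_subset_affine hr hS hSw]
  congr 1 with p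
  have hpu : ⟪o + (p : E) - o, u⟫ = ⟪(p : E), u⟫ := by rw [add_sub_cancel_left]
  have hpw : ⟪o + (p : E) - o, w⟫ = 0 := by
    rw [add_sub_cancel_left, Submodule.mem_orthogonal_singleton_iff_inner_left.1 p.2]
  have hmem : o + (p : E) ∈ {x ∈ P | cylAngle o u w x = 0} ↔
      o + (p : E) ∈ P ∧ 0 ≤ ⟪(p : E), u⟫ := by
    rw [Set.mem_ofPred_eq, cylAngle, polarAngle_eq_zero_iff, hpu, and_iff_left hpw]
  by_cases hpP : o + (p : E) ∈ P
  · by_cases hp : 0 ≤ ⟪(p : E), u⟫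
    · rw [Set.indicator_of_mem (hmem.2 ⟨hpP, hp⟩), Set.indicator_of_mem hpP, max_eq_left hp,
        cylRadius, hpu, hpw, zero_pow two_ne_zero, add_zero, Real.sqrt_sq hp, mul_comm]
    · rw [Set.indicator_of_notMem fun h => hp (hmem.1 h).2, max_eq_right (not_le.1 hp).le,
        zero_mul]
  · rw [Set.indicator_of_notMem fun h => hpP (hmem.1 h).1, Set.indicator_of_notMem hpP, mul_zero]

theorem exists_hasDerivAt_setIntegral_cylAngle_le_of_isBounded (hw : ‖w‖ = 1) (hu : u ≠ 0)
    (huw : ⟪u, w⟫ = 0) : ∃ c : ℝ, ∀ P : Set E, MeasurableSet P → Bornology.IsBounded P →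
      (∀ᵐ p : (ℝ ∙ w)ᗮ ∂μH[Module.finrank ℝ (ℝ ∙ w)ᗮ], o + (p : E) ∉ frontier P) →
      ∀ f : E → ℝ, Continuous f →
        HasDerivAt (fun t => ∫ x in {x ∈ P | cylAngle o u w x ≤ t}, f x)
          (c * ∫ x in {x ∈ P | cylAngle o u w x = 0}, f x * cylRadius o u w x
            ∂μH[Module.finrank ℝ (ℝ ∙ w)ᗮ]) 0 := by
  obtain ⟨c, hc⟩ := exists_volume_eq_smul_map_hyperplaneCoord o hw
  refine ⟨c, fun P hPm hPb hP f hf => ?_⟩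
  have hcoord (s : ℝ) : ∫ x in {x | ⟪x - o, w⟫ ≤ max ⟪x - o, u⟫ 0 * s}, P.indicator f x =
      c * ∫ q in {q : (ℝ ∙ w)ᗮ × ℝ | q.2 ≤ max ⟪(q.1 : E), u⟫ 0 * s},
        P.indicator f (hyperplaneCoord o hw q)
          ∂((μH[Module.finrank ℝ (ℝ ∙ w)ᗮ]).prod volume) := by
    rw [hc, Measure.restrict_smul, integral_smul_nnreal_measure,
      (hyperplaneCoord o hw).measurableEmbedding.setIntegral_map, NNReal.smul_def, smul_eq_mul]
    simp only [Set.preimage_ofPred_eq, inner_hyperplaneCoord_sub_normal hw,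
      inner_hyperplaneCoord_sub_of_inner_eq_zero hw huw]
  have htan : HasDerivAt Real.tan 1 0 := by
    simpa using Real.hasDerivAt_tan (x := 0) (by simp)
  rw [setIntegral_cylAngle_eq_zero hPm f (Nat.cast_nonneg _)]
  have hwedge := (hasDerivAt_setIntegral_subgraph_hyperplaneCoord hw u hPm hPb hP hf).comp_of_eq
    0 htan Real.tan_zero.symm
  refine ((hwedge.const_mul (c : ℝ)).congr_deriv (by rw [mul_one])).congr_of_eventuallyEq ?_
  have hsmall : ∀ᶠ t : ℝ in nhds 0, |t| < Real.pi / 2 := by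
    simpa only [sub_zero] using eventually_abs_sub_lt (0 : ℝ) Real.pi_div_two_pos
  filter_upwards [hsmall] with t ht
  rw [setIntegral_cylAngle_le hu hPm f ht, hcoord]
  rfl

end Hinge

section Wedge

variable {E : Type*} [NormedAddCommGroup E] [InnerProductSpace ℝ E] {P K : Set E} {o u w x : E}

theorem exists_mem_inner_lt_of_mem_interior (hw : w ≠ 0) (hx : x ∈ interior P) :
    ∃ y ∈ P, ⟪x, w⟫ < ⟪y, w⟫ := by
  have hcont : ContinuousAt (fun ε : ℝ => x + ε • w) 0 := by fun_prop
  have hev : ∀ᶠ ε : ℝ in nhdsWithin 0 (Set.Ioi 0), x + ε • w ∈ P :=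
    (hcont.eventually_mem (by simpa using mem_interior_iff_mem_nhds.1 hx)).filter_mono
      nhdsWithin_le_nhds
  obtain ⟨ε, hεP, hε : 0 < ε⟩ := (hev.and self_mem_nhdsWithin).exists
  refine ⟨x + ε • w, hεP, ?_⟩
  rw [inner_add_left, real_inner_smul_left]
  exact lt_add_of_pos_right _ (mul_pos hε (real_inner_self_pos.2 hw))

theorem exists_mem_interior_inner_eq_of_convex (hP : Convex ℝ P) {a q p : E} {c : ℝ}
    (hq : q ∈ interior P) (hqc : ⟪a, q⟫ ≤ c) (hp : p ∈ P) (hpc : c < ⟪a, p⟫) :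
    ∃ x ∈ interior P, ⟪a, x⟫ = c := by
  set s := (⟪a, p⟫ - c) / (⟪a, p⟫ - ⟪a, q⟫) with hs
  have hden : 0 < ⟪a, p⟫ - ⟪a, q⟫ := by linarith
  have hs₀ : 0 < s := div_pos (by linarith) hden
  have hs₁ : s ≤ 1 := (div_le_one hden).2 (by linarith)
  refine ⟨s • q + (1 - s) • p, hP.combo_interior_self_mem_interior hq hp hs₀ (by linarith)
    (by ring), ?_⟩
  rw [inner_add_right, real_inner_smul_right, real_inner_smul_right, hs]
  field_simp
  ring

theorem exists_inner_sub_eq_mul_of_facet {a x₀ : E} {c : ℝ} (hx₀ : x₀ ∈ interior P)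
    (hx₀c : ⟪a, x₀⟫ = c) (hfacet : ∀ x ∈ P, ⟪a, x⟫ = c → ⟪x - o, w⟫ = 0) :
    ∃ l : ℝ, ∀ x, ⟪x - o, w⟫ = l * (⟪a, x⟫ - c) := by
  have hw₀ := hfacet x₀ (interior_subset hx₀) hx₀c
  have hw : w ∈ (ℝ ∙ a)ᗮᗮ := by
    rw [Submodule.mem_orthogonal]
    intro p hp
    rw [Submodule.mem_orthogonal_singleton_iff_inner_right] at hp
    by_contra hpw
    have hcont : ContinuousAt (fun ε : ℝ => x₀ + ε • p) 0 := by fun_prop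
    have hev : ∀ᶠ ε : ℝ in nhdsWithin 0 {0}ᶜ, x₀ + ε • p ∈ P :=
      (hcont.eventually_mem (by simpa using mem_interior_iff_mem_nhds.1 hx₀)).filter_mono
        nhdsWithin_le_nhds
    obtain ⟨ε, hεP, hε : ε ≠ 0⟩ := (hev.and self_mem_nhdsWithin).exists
    have h := hfacet _ hεP (by rw [inner_add_right, real_inner_smul_right, hp, mul_zero, hx₀c,
      add_zero])
    rw [add_sub_right_comm, inner_add_left, hw₀, real_inner_smul_left, zero_add] at h
    exact (mul_ne_zero hε hpw) h
  rw [Submodule.orthogonal_orthogonal, Submodule.mem_span_singleton] at hw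
  obtain ⟨l, rfl⟩ := hw
  refine ⟨l, fun x => ?_⟩
  rw [← sub_zero ⟪x - o, _⟫, ← hw₀, ← inner_sub_left, sub_sub_sub_cancel_right,
    real_inner_smul_right, real_inner_comm, inner_sub_right, hx₀c]

theorem eq_sep_inner_sub_nonpos_of_facet (hP : Convex ℝ P) (hKi : (interior K).Nonempty) {a : E}
    {c : ℝ} (hK : K = P ∩ {x | ⟪a, x⟫ ≤ c}) (hKP : K ≠ P) (hw : w ≠ 0)
    (hfacet : ∀ x ∈ K, ⟪a, x⟫ = c → ⟪x - o, w⟫ = 0) (hle : ∀ x ∈ K, ⟪x - o, w⟫ ≤ 0) :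
    K = {x ∈ P | ⟪x - o, w⟫ ≤ 0} ∧ (interior P ∩ {x | ⟪x - o, w⟫ = 0}).Nonempty := by
  obtain ⟨q, hq⟩ := hKi
  have hKP' : K ⊆ P := hK ▸ Set.inter_subset_left
  have hqc : ⟪a, q⟫ ≤ c := (hK ▸ interior_subset hq : q ∈ P ∩ {x | ⟪a, x⟫ ≤ c}).2
  obtain ⟨p, hpP, hpK⟩ := Set.exists_of_ssubset (hKP'.ssubset_of_ne hKP)
  have hpc : c < ⟪a, p⟫ := not_le.1 fun h => hpK (hK ▸ ⟨hpP, h⟩)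
  obtain ⟨x₀, hx₀, hx₀c⟩ :=
    exists_mem_interior_inner_eq_of_convex hP (interior_mono hKP' hq) hqc hpP hpc
  have hfacet' (x : E) (hx : x ∈ P) (hxc : ⟪a, x⟫ = c) : ⟪x - o, w⟫ = 0 :=
    hfacet x (hK ▸ ⟨hx, hxc.le⟩) hxc
  obtain ⟨l, hl⟩ := exists_inner_sub_eq_mul_of_facet hx₀ hx₀c hfacet'
  have hqw : ⟪q - o, w⟫ < 0 := by
    obtain ⟨y, hy, hqy⟩ := exists_mem_inner_lt_of_mem_interior hw hq
    have := hle y hy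
    rw [inner_sub_left] at this ⊢
    linarith
  have hl₀ : 0 < l := by
    rw [hl] at hqw
    exact pos_of_mul_neg_left hqw (sub_nonpos.2 hqc)
  refine ⟨?_, x₀, hx₀, hfacet' x₀ (interior_subset hx₀) hx₀c⟩
  rw [hK]
  ext x
  refine and_congr_right fun _ => (?_ : _ ↔ ⟪x - o, w⟫ ≤ 0)
  rw [Set.mem_ofPred_eq, hl, ← smul_eq_mul, smul_nonpos_iff_nonpos_of_pos_left hl₀, sub_nonpos]

-- The chord from a point of the cone to `q₀` crosses the hyperplane inside the bounded part of `P`.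
theorem exists_isBounded_cone_of_convex (hP : Convex ℝ P)
    (hb : Bornology.IsBounded {x ∈ P | ⟪x - o, w⟫ ≤ 0}) {q₀ : E} (hq₀ : q₀ ∈ P)
    (hq₀w : ⟪q₀ - o, w⟫ < 0) :
    ∃ s > 0, Bornology.IsBounded {x ∈ P | ⟪x - o, w⟫ ≤ s * ‖x - o‖} := by
  obtain ⟨R, hR⟩ := hb.subset_closedBall o
  have hR' (x : E) (hx : x ∈ P) (hxw : ⟪x - o, w⟫ ≤ 0) : ‖x - o‖ ≤ R :=
    mem_closedBall_iff_norm.1 (hR ⟨hx, hxw⟩)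
  have hq₀R := hR' q₀ hq₀ hq₀w.le
  have hR₀ : 0 ≤ R := (norm_nonneg _).trans hq₀R
  obtain ⟨h, hh⟩ : ∃ h, h = -⟪q₀ - o, w⟫ := ⟨_, rfl⟩
  have hpos : 0 < h := by linarith
  refine ⟨h / (4 * (R + 1)), by positivity, (Metric.isBounded_closedBall (x := o)
    (r := 2 * R)).subset fun q ⟨hq, hqs⟩ => mem_closedBall_iff_norm.2 ?_⟩
  rcases le_or_gt ⟪q - o, w⟫ 0 with hle | hgt
  · linarith [hR' q hq hle]
  obtain ⟨y, hy⟩ : ∃ y, y = ⟪q - o, w⟫ := ⟨_, rfl⟩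
  rw [← hy] at hqs hgt
  have hyh : 0 < y + h := by linarith
  obtain ⟨r, hr⟩ : ∃ r, r = (h / (y + h)) • q + (y / (y + h)) • q₀ := ⟨_, rfl⟩
  have hrP : r ∈ P := hr ▸ hP hq hq₀ (by positivity) (by positivity) (by field_simp; ring)
  have hscaled : (y + h) • (r - o) = h • (q - o) + y • (q₀ - o) := by
    rw [hr, smul_sub, smul_add, smul_smul, smul_smul, mul_div_cancel₀ _ hyh.ne',
      mul_div_cancel₀ _ hyh.ne']
    module
  have hrw : ⟪r - o, w⟫ = 0 := by
    refine (mul_eq_zero_iff_left hyh.ne').1 ?_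
    rw [← real_inner_smul_left, hscaled, inner_add_left, real_inner_smul_left,
      real_inner_smul_left, ← hy, hh]
    ring
  have hn : h * ‖q - o‖ ≤ (y + h) * R + y * R := by
    rw [← norm_smul_of_nonneg hpos.le, ← add_sub_cancel_right (h • (q - o)) (y • (q₀ - o)),
      ← hscaled]
    refine (norm_sub_le _ _).trans ?_
    rw [norm_smul_of_nonneg hyh.le, norm_smul_of_nonneg hgt.le]
    exact add_le_add (mul_le_mul_of_nonneg_left (hR' r hrP hrw.le) hyh.le)
      (mul_le_mul_of_nonneg_left hq₀R hgt.le)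
  have hyn : y * (4 * (R + 1)) ≤ h * ‖q - o‖ := by
    rwa [div_mul_eq_mul_div, le_div_iff₀ (by positivity)] at hqs
  exact le_of_mul_le_mul_left (by nlinarith : h * ‖q - o‖ ≤ h * (2 * R)) hpos

theorem eventually_inner_sub_le_of_cylAngle_le (o u w : E) {s : ℝ} (hs : 0 < s) :
    ∀ᶠ t in nhds (0 : ℝ), ∀ x, cylAngle o u w x ≤ t → ⟪x - o, w⟫ ≤ s * ‖x - o‖ := by
  have htan : Filter.Tendsto (fun t => ‖u‖ * |Real.tan t|) (nhds 0) (nhds 0) := by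
    have hcont : ContinuousAt (fun t => ‖u‖ * |Real.tan t|) 0 :=
      (Real.continuousAt_tan.2 (by simp)).abs.const_mul _
    simpa only [Real.tan_zero, abs_zero, mul_zero] using hcont.tendsto
  have hsmall : ∀ᶠ t : ℝ in nhds 0, |t| < Real.pi / 2 := by
    simpa only [sub_zero] using eventually_abs_sub_lt (0 : ℝ) Real.pi_div_two_pos
  filter_upwards [hsmall, htan.eventually_le_const hs] with t ht hts x hx
  calc ⟪x - o, w⟫ ≤ max ⟪x - o, u⟫ 0 * Real.tan t := le_max_mul_tan_of_polarAngle_le ht hx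
    _ ≤ max ⟪x - o, u⟫ 0 * |Real.tan t| :=
      mul_le_mul_of_nonneg_left (le_abs_self _) (le_max_right _ _)
    _ ≤ ‖x - o‖ * ‖u‖ * |Real.tan t| := by
      gcongr
      exact max_le (real_inner_le_norm _ _) (by positivity)
    _ ≤ s * ‖x - o‖ := by
      rw [mul_assoc, mul_comm]
      gcongr

theorem exists_ball_eventually_cylAngle_le_subset (hP : Convex ℝ P) (u : E) (hw : w ≠ 0)
    (hb : Bornology.IsBounded {x ∈ P | ⟪x - o, w⟫ ≤ 0})
    (hne : (interior P ∩ {x | ⟪x - o, w⟫ = 0}).Nonempty) :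
    ∃ R, ∀ᶠ t in nhds (0 : ℝ), {x ∈ P | cylAngle o u w x ≤ t} ⊆ Metric.ball o R := by
  obtain ⟨x, hx, hxw : ⟪x - o, w⟫ = 0⟩ := hne
  obtain ⟨q, hq, hqx⟩ := exists_mem_inner_lt_of_mem_interior (neg_ne_zero.2 hw) hx
  have hqw : ⟪q - o, w⟫ < 0 := by
    rw [inner_neg_right, inner_neg_right] at hqx
    rw [inner_sub_left] at hxw ⊢
    linarith
  obtain ⟨s, hs, hcone⟩ := exists_isBounded_cone_of_convex hP hb hq hqw
  obtain ⟨R, hR⟩ := hcone.subset_ball o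
  refine ⟨R, ?_⟩
  filter_upwards [eventually_inner_sub_le_of_cylAngle_le o u w hs] with t ht y hy
  exact hR ⟨hy.1, ht y hy.2⟩

variable [MeasurableSpace E] [BorelSpace E] [FiniteDimensional ℝ E]

theorem exists_hasDerivAt_setIntegral_cylAngle_le (hw : ‖w‖ = 1) (hu : u ≠ 0) (huw : ⟪u, w⟫ = 0)
    (hPm : MeasurableSet P) (hP : Convex ℝ P) (hb : Bornology.IsBounded {x ∈ P | ⟪x - o, w⟫ ≤ 0})
    (hne : (interior P ∩ {x | ⟪x - o, w⟫ = 0}).Nonempty) :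
    (∀ᶠ t in nhds (0 : ℝ), Bornology.IsBounded {x ∈ P | cylAngle o u w x ≤ t}) ∧
      ∃ c : ℝ, ∀ f : E → ℝ, Continuous f →
        HasDerivAt (fun t => ∫ x in {x ∈ P | cylAngle o u w x ≤ t}, f x)
          (c * ∫ x in {x ∈ P | cylAngle o u w x = 0}, f x * cylRadius o u w x
            ∂μH[Module.finrank ℝ (ℝ ∙ w)ᗮ]) 0 := by
  obtain ⟨R, hR⟩ := exists_ball_eventually_cylAngle_le_subset hP u
    (norm_ne_zero_iff.1 (hw ▸ one_ne_zero)) hb hne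
  refine ⟨hR.mono fun t ht => Metric.isBounded_ball.subset ht, ?_⟩
  obtain ⟨c, hc⟩ := exists_hasDerivAt_setIntegral_cylAngle_le_of_isBounded (o := o) hw hu huw
  refine ⟨c, fun f hf => ?_⟩
  have hsep {p : E → Prop} (h : {x ∈ P | p x} ⊆ Metric.ball o R) :
      {x ∈ P ∩ Metric.ball o R | p x} = {x ∈ P | p x} :=
    Set.ext fun x => ⟨fun hx => ⟨hx.1.1, hx.2⟩, fun hx => ⟨⟨hx.1, h hx⟩, hx.2⟩⟩
  have hzero : {x ∈ P | cylAngle o u w x = 0} ⊆ Metric.ball o R :=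
    fun x hx => hR.self_of_nhds ⟨hx.1, hx.2.le⟩
  have hneQ : (interior (P ∩ Metric.ball o R) ∩ {x | x - o ∈ (ℝ ∙ w)ᗮ}).Nonempty := by
    obtain ⟨x, hx, hxw⟩ := hne
    rw [interior_inter, Metric.isOpen_ball.interior_eq]
    exact ⟨x, ⟨hx, hR.self_of_nhds ⟨interior_subset hx, polarAngle_nonpos_iff.2 hxw.le⟩⟩,
      Submodule.mem_orthogonal_singleton_iff_inner_left.2 hxw⟩
  have hQ := hc (P ∩ Metric.ball o R) (hPm.inter measurableSet_ball)
    (Metric.isBounded_ball.subset Set.inter_subset_right)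
    (ae_const_add_coe_notMem_frontier (hP.inter (convex_ball o R)) hneQ _) f hf
  rw [hsep hzero] at hQ
  refine hQ.congr_of_eventuallyEq ?_
  filter_upwards [hR] with t ht
  rw [hsep ht]

end Wedge

section Covariance

variable {d : ℕ}

theorem centroid_apply {S : Set (Euc d)} (hS : Bornology.IsBounded S) (i : Fin d) :
    centroid S i = (volume S).toReal⁻¹ * ∫ x in S, x i :=
  congrArg ((volume S).toReal⁻¹ * ·) <| ((EuclideanSpace.proj i : Euc d →L[ℝ] ℝ).integral_comp_comm
    (integrableOn_of_continuous_of_isBounded continuous_id hS)).symm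

theorem covMatrix_apply {S : Set (Euc d)} (hS : Bornology.IsBounded S) (i j : Fin d) :
    covMatrix S i j = (volume S).toReal⁻¹ * (∫ x in S, x i * x j) -
      ((volume S).toReal⁻¹ * ∫ x in S, x i) * ((volume S).toReal⁻¹ * ∫ x in S, x j) := by
  have hint (f : Euc d → ℝ) (hf : Continuous f) : IntegrableOn f S :=
    integrableOn_of_continuous_of_isBounded hf hS
  have hexpand (r s : ℝ) : ∫ x in S, (x i - r) * (x j - s) =
      (∫ x in S, x i * x j) - (∫ x in S, x i) * s - r * (∫ x in S, x j) +
        r * s * (volume S).toReal := by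
    calc ∫ x in S, (x i - r) * (x j - s) = ∫ x in S, (x i * x j - x i * s - r * x j + r * s) :=
          integral_congr_ae (.of_forall fun x => by ring)
      _ = _ := by
        rw [integral_add, integral_sub, integral_sub, integral_mul_const, integral_const_mul,
          setIntegral_const, smul_eq_mul, mul_comm (volume.real S)]
        · rfl
        all_goals exact hint _ (by fun_prop)
  rw [covMatrix, Matrix.of_apply, hexpand, centroid_apply hS, centroid_apply hS]
  rcases eq_or_ne (volume S).toReal 0 with hV | hV
  · simp [hV]
  · field_simp
    ring

variable {S : ℝ → Set (Euc d)} {t₀ : ℝ} {D : (Euc d → ℝ) → ℝ}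

theorem hasDerivAt_volume
    (hD : ∀ f, Continuous f → HasDerivAt (fun t => ∫ x in S t, f x) (D f) t₀) :
    HasDerivAt (fun t => (volume (S t)).toReal) (D fun _ => 1) t₀ := by
  simpa [Measure.real] using hD (fun _ => 1) continuous_const

theorem sum_hasDerivAt_functional_mul_self (hb : ∀ᶠ t in nhds t₀, Bornology.IsBounded (S t))
    (hD : ∀ f, Continuous f → HasDerivAt (fun t => ∫ x in S t, f x) (D f) t₀) :
    ∑ i, D (fun x => x i * x i) = D fun x => ‖x‖ ^ 2 := by
  refine (HasDerivAt.fun_sum fun i _ => hD (fun x => x i * x i) (by fun_prop)).unique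
    ((hD (fun x => ‖x‖ ^ 2) (by fun_prop)).congr_of_eventuallyEq ?_)
  filter_upwards [hb] with t ht
  rw [← integral_finsetSum _ fun i _ => integrableOn_of_continuous_of_isBounded
    (by fun_prop : Continuous fun x : Euc d => x i * x i) ht]
  simp only [EuclideanSpace.real_norm_sq_eq, ← sq]

theorem hasDerivAt_covMatrix_apply (hb : ∀ᶠ t in nhds t₀, Bornology.IsBounded (S t))
    (hcentroid : centroid (S t₀) = 0) (hV : (volume (S t₀)).toReal ≠ 0)
    (hD : ∀ f, Continuous f → HasDerivAt (fun t => ∫ x in S t, f x) (D f) t₀) (i j : Fin d) :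
    HasDerivAt (fun t => covMatrix (S t) i j)
      ((D (fun x => x i * x j) - covMatrix (S t₀) i j * D fun _ => 1) / (volume (S t₀)).toReal)
      t₀ := by
  have hmean (k : Fin d) : (volume (S t₀)).toReal⁻¹ * ∫ x in S t₀, x k = 0 := by
    rw [← centroid_apply hb.self_of_nhds, hcentroid, PiLp.zero_apply]
  have hinv := (hasDerivAt_volume hD).inv hV
  have hmom (k : Fin d) := hinv.mul (hD (fun x => x k) (by fun_prop))
  have hcov := (hinv.mul (hD (fun x => x i * x j) (by fun_prop))).sub ((hmom i).mul (hmom j))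
  refine (hcov.congr_deriv ?_).congr_of_eventuallyEq (hb.mono fun t ht => covMatrix_apply ht i j)
  rw [covMatrix_apply hb.self_of_nhds]
  simp only [Pi.mul_apply, Pi.inv_apply, hmean]
  field_simp
  ring

theorem hasDerivAt_det_covMatrix (hb : ∀ᶠ t in nhds t₀, Bornology.IsBounded (S t))
    (hiso : IsIsotropic (S t₀)) (hV : (volume (S t₀)).toReal ≠ 0)
    (hD : ∀ f, Continuous f → HasDerivAt (fun t => ∫ x in S t, f x) (D f) t₀) :
    HasDerivAt (fun t => (covMatrix (S t)).det)
      ((D (fun x => ‖x‖ ^ 2) - d * D fun _ => 1) / (volume (S t₀)).toReal) t₀ := by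
  refine (hasDerivAt_det (A' := Matrix.of fun i j => _)
    (hasDerivAt_covMatrix_apply hb hiso.1 hV hD)).congr_deriv ?_
  rw [hiso.2, Matrix.adjugate_one, one_mul, ← sum_hasDerivAt_functional_mul_self hb hD]
  simp only [Matrix.trace, Matrix.diag, Matrix.of_apply, Matrix.one_apply_eq, one_mul,
    ← div_eq_mul_inv]
  rw [← Finset.sum_div, Finset.sum_sub_distrib, Fin.sum_const, nsmul_eq_mul]

end Covariance

section Hinging

theorem setIntegral_mul_cylRadius_div_mul_cancel {E : Type*} [NormedAddCommGroup E]
    [InnerProductSpace ℝ E] [MeasurableSpace E] [BorelSpace E] [FiniteDimensional ℝ E]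
    {S : Set E} (hS : Bornology.IsBounded S) {o : E} {H : Submodule ℝ E}
    (hSH : S ⊆ {x | x - o ∈ H}) (u w : E) (f : E → ℝ) :
    (∫ x in S, f x * cylRadius o u w x ∂μH[Module.finrank ℝ H]) /
        (∫ x in S, cylRadius o u w x ∂μH[Module.finrank ℝ H]) *
      ∫ x in S, cylRadius o u w x ∂μH[Module.finrank ℝ H] =
        ∫ x in S, f x * cylRadius o u w x ∂μH[Module.finrank ℝ H] :=
  div_mul_cancel_of_imp <| integral_mul_eq_zero_of_nonneg (fun _ => Real.sqrt_nonneg _)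
    (integrableOn_hausdorffMeasure_of_subset_affine continuous_cylRadius hS hSH)

theorem finrank_orthogonal_span_singleton_eq_sub_one {d : ℕ} {w : Euc d} (hw : w ≠ 0) :
    (Module.finrank ℝ (ℝ ∙ w)ᗮ : ℝ) = d - 1 := by
  have h := Submodule.finrank_add_finrank_orthogonal (ℝ ∙ w)
  rw [finrank_span_singleton hw, finrank_euclideanSpace_fin] at h
  exact eq_sub_of_add_eq' (mod_cast h)

theorem convex_biInter_inner_le {E ι : Type*} [NormedAddCommGroup E] [InnerProductSpace ℝ E]
    (s : Finset ι) (a : ι → E) (c : ι → ℝ) : Convex ℝ (⋂ j ∈ s, {x | ⟪a j, x⟫ ≤ c j}) :=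
  convex_iInter₂ fun j _ => convex_halfSpace_le (innerₛₗ ℝ (a j)).isLinear (c j)

theorem measurableSet_biInter_inner_le {E ι : Type*} [NormedAddCommGroup E]
    [InnerProductSpace ℝ E] [MeasurableSpace E] [OpensMeasurableSpace E]
    (s : Finset ι) (a : ι → E) (c : ι → ℝ) : MeasurableSet (⋂ j ∈ s, {x | ⟪a j, x⟫ ≤ c j}) :=
  s.measurableSet_biInter fun _ _ =>
    (isClosed_le (continuous_const.inner continuous_id) continuous_const).measurableSet

theorem iInter_eq_biInter_erase_inter {ι α : Type*} [Fintype ι] [DecidableEq ι] (H : ι → Set α)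
    (i : ι) : ⋂ j, H j = (⋂ j ∈ univ.erase i, H j) ∩ H i := by
  rw [Set.inter_comm, ← Finset.set_biInter_insert, Finset.insert_erase (mem_univ i)]
  simp

theorem stmt6_general {d : ℕ} {K P : Set (Euc d)} (hKb : Bornology.IsBounded K)
    (hKi : (interior K).Nonempty) (hiso : IsIsotropic K) (hPm : MeasurableSet P)
    (hP : Convex ℝ P) {a : Euc d} {c : ℝ} (hK : K = P ∩ {x | ⟪a, x⟫ ≤ c}) (hKP : K ≠ P)
    {o u w : Euc d} (hu : u ≠ 0) (hw : ‖w‖ = 1) (huw : ⟪u, w⟫ = 0)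
    (hfacet : ∀ x ∈ K ∩ {x | ⟪a, x⟫ = c}, cylAngle o u w x = 0)
    (hrange : ∀ x ∈ K, cylAngle o u w x ≤ 0) :
    ∃ V : ℝ,
      HasDerivAt (fun t => (volume {x ∈ P | cylAngle o u w x ∈ Set.Icc (-Real.pi) t}).toReal) V 0 ∧
      HasDerivAt (fun t => (covMatrix {x ∈ P | cylAngle o u w x ∈ Set.Icc (-Real.pi) t}).det)
        (((∫ x in {x ∈ P | cylAngle o u w x = 0}, ‖x‖ ^ 2 * cylRadius o u w x ∂μH[(d - 1 : ℝ)]) /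
            (∫ x in {x ∈ P | cylAngle o u w x = 0}, cylRadius o u w x ∂μH[(d - 1 : ℝ)]) - d) * V /
          (volume K).toReal) 0 := by
  have hw₀ : w ≠ 0 := norm_ne_zero_iff.1 (hw ▸ one_ne_zero)
  obtain ⟨hKw, hne⟩ := eq_sep_inner_sub_nonpos_of_facet hP hKi hK hKP hw₀
    (fun x hx hxc => (polarAngle_eq_zero_iff.1 (hfacet x ⟨hx, hxc⟩)).2)
    fun x hx => polarAngle_nonpos_iff.1 (hrange x hx)
  obtain ⟨hb, C, hC⟩ :=
    exists_hasDerivAt_setIntegral_cylAngle_le hw hu huw hPm hP (hKw ▸ hKb) hne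
  have hK₀ : {x ∈ P | cylAngle o u w x ≤ 0} = K := by
    rw [hKw]
    exact Set.ext fun x => and_congr_right fun _ => polarAngle_nonpos_iff
  have hKvol : (volume K).toReal ≠ 0 :=
    (ENNReal.toReal_pos (Measure.measure_pos_of_nonempty_interior volume hKi).ne'
      hKb.measure_lt_top.ne).ne'
  have hslice : Bornology.IsBounded {x ∈ P | cylAngle o u w x = 0} :=
    hb.self_of_nhds.subset fun x hx => ⟨hx.1, hx.2.le⟩
  have hslicew : {x ∈ P | cylAngle o u w x = 0} ⊆ {x | x - o ∈ (ℝ ∙ w)ᗮ} := fun x hx =>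
    Submodule.mem_orthogonal_singleton_iff_inner_left.2 (polarAngle_eq_zero_iff.1 hx.2).2
  have hratio := setIntegral_mul_cylRadius_div_mul_cancel hslice hslicew u w (‖·‖ ^ 2)
  rw [finrank_orthogonal_span_singleton_eq_sub_one hw₀] at hC hratio
  have hdet := hasDerivAt_det_covMatrix hb (hK₀.symm ▸ hiso) (hK₀.symm ▸ hKvol) hC
  have hIcc (t : ℝ) (x : Euc d) : cylAngle o u w x ∈ Set.Icc (-Real.pi) t ↔ cylAngle o u w x ≤ t :=
    and_iff_right (neg_pi_le_polarAngle _ _)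
  simp only [hIcc]
  refine ⟨_, hasDerivAt_volume hC, hdet.congr_deriv ?_⟩
  simp only [one_mul]
  rw [hK₀]
  linear_combination (-C / (volume K).toReal) * hratio

end Hinging

/-- **Statement 5** (Lemma: derivative with respect to hinging). Let `K` be an isotropic
simplicial polytope with irredundant H-representation `K = ∩ᵢ Hᵢ`, let `P` be the polyhedron
obtained by relaxing the halfspace of facet `i'`, and introduce cylindrical coordinates
`(ρ, θ, z)` around the axis `Z` spanned by all vertices of facet `i'` except `v j'`, oriented so
that the facet has `θ = 0` and `K` has `θ ∈ (-π, 0]`. With `K_t = {x ∈ P : θ(x) ∈ [-π, t]}`,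
`S₀ = P ∩ {θ = 0}`, and `D` the distribution on `S₀` with density proportional to `ρ`, the
function `t ↦ det A(K_t)` is differentiable at `0` with derivative
`(E_{X ∼ D}[‖X‖²] - d) · (d/dt vol K_t |₀) / vol K`. -/
theorem stmt6 {d m : ℕ} (K : Set (Euc d)) (hbody : IsConvexBody K)
    (hiso : IsIsotropic K) (hsimp : IsSimplicialPolytope d K)
    (a : Fin m → Euc d) (c : Fin m → ℝ) (ha : ∀ i, a i ≠ 0)
    (hrep : K = ⋂ i, {x : Euc d | ⟪a i, x⟫ ≤ c i})
    (hirr : ∀ i : Fin m, K ≠ ⋂ j ∈ Finset.univ.erase i, {x : Euc d | ⟪a j, x⟫ ≤ c j})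
    (i' : Fin m)
    (P : Set (Euc d)) (hP : P = ⋂ j ∈ Finset.univ.erase i', {x : Euc d | ⟪a j, x⟫ ≤ c j})
    (v : Fin d → Euc d) (hvind : AffineIndependent ℝ v)
    (hfacet : K ∩ {x : Euc d | ⟪a i', x⟫ = c i'} = convexHull ℝ (Set.range v))
    (j' : Fin d)
    (Z : AffineSubspace ℝ (Euc d)) (hZ : Z = affineSpan ℝ (v '' {j | j ≠ j'}))
    (o : Euc d) (ho : o ∈ (Z : Set (Euc d)) ∩ K)
    (u w : Euc d) (hu : u ∈ Z.directionᗮ) (hw : w ∈ Z.directionᗮ)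
    (hun : ‖u‖ = 1) (hwn : ‖w‖ = 1) (huw : ⟪u, w⟫ = 0)
    (θ ρ : Euc d → ℝ)
    (hθ : θ = fun x => polarAngle ⟪x - o, u⟫ ⟪x - o, w⟫)
    (hρ : ρ = fun x => Real.sqrt (⟪x - o, u⟫ ^ 2 + ⟪x - o, w⟫ ^ 2))
    (horient : ∀ x ∈ convexHull ℝ (Set.range v), θ x = 0)
    (hKrange : ∀ x ∈ K, θ x ∈ Set.Ioc (-Real.pi) 0)
    (Kt : ℝ → Set (Euc d))
    (hKt : Kt = fun t => {x ∈ P | θ x ∈ Set.Icc (-Real.pi) t})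
    (S₀ : Set (Euc d)) (hS₀ : S₀ = P ∩ {x : Euc d | θ x = 0})
    (EX : ℝ)
    (hEX : EX = (∫ x in S₀, ‖x‖ ^ 2 * ρ x ∂(μH[(d - 1 : ℝ)])) /
                (∫ x in S₀, ρ x ∂(μH[(d - 1 : ℝ)]))) :
    ∃ V : ℝ, HasDerivAt (fun t => (volume (Kt t)).toReal) V 0 ∧
      HasDerivAt (fun t => (covMatrix (Kt t)).det)
        ((EX - d) * V / (volume K).toReal) 0 := by
  subst hP hθ hρ hKt hS₀ hEX
  exact stmt6_general hbody.1.isBounded hbody.2.2 hiso (measurableSet_biInter_inner_le _ a c)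
    (convex_biInter_inner_le _ a c) (hrep.trans (iInter_eq_biInter_erase_inter _ i')) (hirr i')
    (norm_ne_zero_iff.1 (hun ▸ one_ne_zero)) hwn huw (hfacet ▸ horient) fun x hx => (hKrange x hx).2

end
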